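/- arXiv:1406.7098 — 9 statements merged into one kernel-verified Lean document; each statement's English description precedes it below -/
import Mathlib

section
/- For every side-information digraph E on Fin n, the minimum length ℓ over all linear index codes for E equals minrk₂(E): there exists a linear index code for E of length minrk₂(E), and every linear index code for E has length at least minrk₂(E). -/
/-- A matrix `A` over `ZMod 2` fits the side-information digraph `E` if it has ones on the
diagonal and zeros at all off-diagonal non-edge positions. -/
def Fits {n : ℕ} (E : Fin n → Fin n → Prop) (A : Matrix (Fin n) (Fin n) (ZMod 2)) : Prop :=
  (∀ i, A i i = 1) ∧ ∀ i j, i ≠ j → ¬E i j → A i j = 0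

/-- `minrk₂` of a side-information digraph: the minimum `ZMod 2` rank over matrices fitting it. -/
noncomputable def minrk2 {n : ℕ} (E : Fin n → Fin n → Prop) : ℕ :=
  sInf {r : ℕ | ∃ A : Matrix (Fin n) (Fin n) (ZMod 2), Fits E A ∧ A.rank = r}

/-- `Enc` is (the encoding map of) an index code of length `ℓ` for the side-information
digraph `E`: every client `i` can decode `x i` from the encoded word and the restriction of
`x` to its side information `{j | E i j}`. -/
def IsIndexCode {n ℓ : ℕ} (E : Fin n → Fin n → Prop)
    (Enc : (Fin n → ZMod 2) → (Fin ℓ → ZMod 2)) : Prop :=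
  ∃ Dec : (i : Fin n) → (Fin ℓ → ZMod 2) → ({j : Fin n // E i j} → ZMod 2) → ZMod 2,
    ∀ (x : Fin n → ZMod 2) (i : Fin n), Dec i (Enc x) (fun j => x j.1) = x i

/-- There is an index code of length `ℓ` for `E`. -/
def HasIndexCode {n : ℕ} (E : Fin n → Fin n → Prop) (ℓ : ℕ) : Prop :=
  ∃ Enc : (Fin n → ZMod 2) → (Fin ℓ → ZMod 2), IsIndexCode E Enc

/-- There is a linear index code of length `ℓ` for `E`. -/
def HasLinearIndexCode {n : ℕ} (E : Fin n → Fin n → Prop) (ℓ : ℕ) : Prop :=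
  ∃ Enc : (Fin n → ZMod 2) → (Fin ℓ → ZMod 2),
    IsLinearMap (ZMod 2) Enc ∧ IsIndexCode E Enc

/-- The minimal index code length `ℓ*(E)`. -/
noncomputable def minIndexCodeLength {n : ℕ} (E : Fin n → Fin n → Prop) : ℕ :=
  sInf {ℓ : ℕ | HasIndexCode E ℓ}

/-- A directed cycle of `E`: a list of at least two distinct vertices with an edge from each
vertex to the cyclically next one. -/
def IsDirCycle {n : ℕ} (E : Fin n → Fin n → Prop) (c : List (Fin n)) : Prop :=
  2 ≤ c.length ∧ c.Nodup ∧
    ∀ t : Fin c.length,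
      E (c.get t) (c.get ⟨(t.1 + 1) % c.length, Nat.mod_lt _ t.pos⟩)

/-!
A linear encoder lets client `i` decode exactly when every `x` in its kernel that vanishes on the
side information of `i` has `x i = 0`. A matrix fitting the digraph satisfies `(A x) i = x i` for
every `x` vanishing on the side information of `i`, so `x ↦ A x` is decodable, and coordinates on
the range of `A` turn it into a code of length `A.rank`. Conversely, by duality the kernel
condition for `L` yields a linear functional `g i` with `g i (L x) = x i` for every such `x`;
testing on standard basis vectors shows that the matrix of `x ↦ (g i (L x))ᵢ`, which factors
through the codeword space, fits the digraph.
-/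

section Decodable

variable {ι α β : Type*} {E : ι → ι → Prop}

/-- Decodability for an arbitrary alphabet `α` and an arbitrary set `β` of codewords: every client
`i` recovers `x i` from `Enc x` and its side information. For `α = ZMod 2` and `β = Fin ℓ → ZMod 2`
this is definitionally `IsIndexCode`. -/
def IsDecodable (E : ι → ι → Prop) (Enc : (ι → α) → β) : Prop :=
  ∃ Dec : (i : ι) → β → ({j : ι // E i j} → α) → α,
    ∀ (x : ι → α) (i : ι), Dec i (Enc x) (fun j => x j.1) = x i

theorem isDecodable_iff_forall_eq [Nonempty α] {Enc : (ι → α) → β} :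
    IsDecodable E Enc ↔
      ∀ i x y, Enc x = Enc y → (∀ j, E i j → x j = y j) → x i = y i := by
  constructor
  · rintro ⟨Dec, hDec⟩ i x y hEnc hside
    have hrestrict : (fun j : {j // E i j} => x j.1) = fun j => y j.1 :=
      funext fun j => hside j.1 j.2
    rw [← hDec x i, ← hDec y i, hEnc, hrestrict]
  · intro h
    have hfactors : ∀ i, ∃ D : β × ({j // E i j} → α) → α,
        (fun x : ι → α => x i) = D ∘ fun x => (Enc x, fun j => x j.1) := fun i =>
      (Function.factorsThrough_iff _).1 fun x y hxy =>
        h i x y (congrArg Prod.fst hxy) fun j hj => congrFun (congrArg Prod.snd hxy) ⟨j, hj⟩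
    choose D hD using hfactors
    exact ⟨fun i b s => D i (b, s), fun x i => (congrFun (hD i) x).symm⟩

theorem isDecodable_linearMap_iff {R W : Type*} [Ring R] [AddCommGroup W] [Module R W]
    {L : (ι → R) →ₗ[R] W} :
    IsDecodable E L ↔ ∀ i x, L x = 0 → (∀ j, E i j → x j = 0) → x i = 0 := by
  rw [isDecodable_iff_forall_eq]
  constructor
  · intro h i x hL hside
    exact h i x 0 (hL.trans L.map_zero.symm) hside
  · intro h i x y hL hside
    exact sub_eq_zero.1 <| h i (x - y) (by rw [map_sub, hL, sub_self])
      fun j hj => sub_eq_zero.2 (hside j hj)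

end Decodable

section MatrixFits

variable {ι R : Type*} {E : ι → ι → Prop}

/-- Fitting a side-information digraph, for matrices over an arbitrary coefficient type; over
`ZMod 2` and `Fin n` this is definitionally `Fits`. -/
def MatrixFits [Zero R] [One R] (E : ι → ι → Prop) (A : Matrix ι ι R) : Prop :=
  (∀ i, A i i = 1) ∧ ∀ i j, i ≠ j → ¬E i j → A i j = 0

theorem matrixFits_one [DecidableEq ι] [Zero R] [One R] :
    MatrixFits E (1 : Matrix ι ι R) :=
  ⟨Matrix.one_apply_eq, fun _ _ hij _ => Matrix.one_apply_ne hij⟩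

theorem MatrixFits.mulVec_apply_eq [Fintype ι] [NonAssocSemiring R] {A : Matrix ι ι R}
    (hA : MatrixFits E A) {x : ι → R} {i : ι} (hside : ∀ j, E i j → x j = 0) :
    (A.mulVec x) i = x i := by
  have hoff : ∀ j, j ≠ i → A i j * x j = 0 := fun j hj => by
    by_cases hE : E i j
    · rw [hside j hE, mul_zero]
    · rw [hA.2 i j hj.symm hE, zero_mul]
  calc (A.mulVec x) i = A i i * x i := Fintype.sum_eq_single i hoff
    _ = x i := by rw [hA.1, one_mul]

theorem MatrixFits.isDecodable_mulVecLin [Fintype ι] [CommRing R] {A : Matrix ι ι R}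
    (hA : MatrixFits E A) : IsDecodable E A.mulVecLin :=
  isDecodable_linearMap_iff.2 fun i _ hker hside =>
    (hA.mulVec_apply_eq hside).symm.trans (congrFun hker i)

theorem matrixFits_of_mulVec_apply_eq [Fintype ι] [NonAssocSemiring R] (hirr : ∀ i, ¬E i i)
    {A : Matrix ι ι R} (hA : ∀ i x, (∀ j, E i j → x j = 0) → (A.mulVec x) i = x i) :
    MatrixFits E A := by
  classical
  have hentry : ∀ i j, ¬E i j → A i j = (Pi.single j 1 : ι → R) i := fun i j hij => by
    have hside : ∀ k, E i k → (Pi.single j 1 : ι → R) k = 0 := fun k hk =>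
      Pi.single_eq_of_ne (fun hkj : k = j => hij (hkj ▸ hk)) 1
    rw [← hA i _ hside, Matrix.mulVec_single_one, Matrix.col_apply]
  exact ⟨fun i => (hentry i i (hirr i)).trans (Pi.single_eq_same i 1),
    fun i j hne hij => (hentry i j hij).trans (Pi.single_eq_of_ne hne 1)⟩

/-- The minimum rank of a matrix over `R` fitting `E`, extending `minrk2` to other coefficient
semirings. The set is nonempty, since it contains the rank of the identity matrix. -/
noncomputable def minrk [Fintype ι] (R : Type*) [CommSemiring R] (E : ι → ι → Prop) : ℕ :=
  sInf {r : ℕ | ∃ A : Matrix ι ι R, MatrixFits E A ∧ A.rank = r}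

theorem exists_matrixFits_rank_eq_minrk [Fintype ι] (R : Type*) [CommSemiring R]
    (E : ι → ι → Prop) : ∃ A : Matrix ι ι R, MatrixFits E A ∧ A.rank = minrk R E := by
  classical
  have hne : {r : ℕ | ∃ A : Matrix ι ι R, MatrixFits E A ∧ A.rank = r}.Nonempty :=
    ⟨_, 1, matrixFits_one, rfl⟩
  exact Nat.sInf_mem hne

theorem MatrixFits.minrk_le_rank [Fintype ι] [CommSemiring R] {A : Matrix ι ι R}
    (hA : MatrixFits E A) : minrk R E ≤ A.rank :=
  Nat.sInf_le ⟨A, hA, rfl⟩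

end MatrixFits

section LinearCode

open Module

variable {ι K W : Type*} [Field K] [AddCommGroup W] [Module K W] {E : ι → ι → Prop}

/-- Existence of a linear index code of length `ℓ` with symbols in `K`; over `ZMod 2` this is
definitionally `HasLinearIndexCode`. -/
def HasLinearIndexCodeOver (K : Type*) [Semiring K] (E : ι → ι → Prop) (ℓ : ℕ) : Prop :=
  ∃ Enc : (ι → K) → (Fin ℓ → K), IsLinearMap K Enc ∧ IsDecodable E Enc

theorem IsDecodable.hasLinearIndexCodeOver_finrank_range [Finite ι] {L : (ι → K) →ₗ[K] W}
    (hL : IsDecodable E L) : HasLinearIndexCodeOver K E (finrank K (LinearMap.range L)) := by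
  let e := (finBasis K (LinearMap.range L)).equivFun
  let Enc := e.toLinearMap ∘ₗ L.rangeRestrict
  have hker : ∀ x, Enc x = 0 → L x = 0 := fun x hx =>
    congrArg Subtype.val (e.map_eq_zero_iff.1 hx)
  exact ⟨Enc, Enc.isLinear, isDecodable_linearMap_iff.2 fun i x hx =>
    isDecodable_linearMap_iff.1 hL i x (hker x hx)⟩

theorem exists_dual_apply_eq_on {V : Type*} [AddCommGroup V] [Module K V] (L : V →ₗ[K] W)
    (S : Submodule K V) (f : Dual K V) (h : ∀ x ∈ S, L x = 0 → f x = 0) :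
    ∃ g : Dual K W, ∀ x ∈ S, g (L x) = f x := by
  have hmem : f.domRestrict S ∈ LinearMap.range (L.domRestrict S).dualMap := by
    rw [LinearMap.range_dualMap_eq_dualAnnihilator_ker, Submodule.mem_dualAnnihilator]
    exact fun x hx => h x x.2 hx
  obtain ⟨g, hg⟩ := hmem
  exact ⟨g, fun x hx => LinearMap.congr_fun hg ⟨x, hx⟩⟩

theorem IsDecodable.exists_linear_decoding {L : (ι → K) →ₗ[K] W} (hL : IsDecodable E L)
    (i : ι) : ∃ g : Dual K W, ∀ x : ι → K, (∀ j, E i j → x j = 0) → g (L x) = x i :=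
  exists_dual_apply_eq_on L (Submodule.pi {j | E i j} fun _ => ⊥) (LinearMap.proj i)
    fun x hside hker => isDecodable_linearMap_iff.1 hL i x hker hside

theorem IsDecodable.minrk_le_finrank [Fintype ι] [FiniteDimensional K W]
    (hirr : ∀ i, ¬E i i) {L : (ι → K) →ₗ[K] W} (hL : IsDecodable E L) :
    minrk K E ≤ finrank K W := by
  classical
  choose g hg using hL.exists_linear_decoding
  have hfits : MatrixFits E (LinearMap.pi g ∘ₗ L).toMatrix' :=
    matrixFits_of_mulVec_apply_eq hirr fun i x hside => by
      rw [LinearMap.toMatrix'_mulVec]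
      exact hg i x hside
  calc minrk K E ≤ (LinearMap.pi g ∘ₗ L).toMatrix'.rank := hfits.minrk_le_rank
    _ = finrank K (LinearMap.range (LinearMap.pi g ∘ₗ L)) := by
      rw [Matrix.rank, ← Matrix.toLin'_apply', Matrix.toLin'_toMatrix']
    _ ≤ finrank K (LinearMap.range (LinearMap.pi g)) :=
      Submodule.finrank_mono (LinearMap.range_comp_le_range _ _)
    _ ≤ finrank K W := LinearMap.finrank_range_le _

end LinearCode

theorem minLinearIndexCodeLength_eq_minrk2_general {ι : Type*} [Fintype ι] (K : Type*) [Field K]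
    (E : ι → ι → Prop) (hirr : ∀ i, ¬E i i) :
    HasLinearIndexCodeOver K E (minrk K E) ∧
      ∀ ℓ : ℕ, HasLinearIndexCodeOver K E ℓ → minrk K E ≤ ℓ := by
  constructor
  · obtain ⟨A, hA, hrank⟩ := exists_matrixFits_rank_eq_minrk K E
    exact hrank ▸ hA.isDecodable_mulVecLin.hasLinearIndexCodeOver_finrank_range
  · rintro ℓ ⟨Enc, hlin, hdec⟩
    have hmap : IsDecodable E (hlin.mk' Enc) := hdec
    simpa only [Module.finrank_fin_fun] using hmap.minrk_le_finrank hirr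

/-- The minimum length of a linear index code for a side-information digraph `E` equals
`minrk₂(E)`: a linear index code of length `minrk₂(E)` exists, and no shorter linear index
code exists. -/
theorem minLinearIndexCodeLength_eq_minrk2
    (n : ℕ) (hn : 1 ≤ n) (E : Fin n → Fin n → Prop) (hirr : ∀ i, ¬E i i) :
    HasLinearIndexCode E (minrk2 E) ∧
      ∀ ℓ : ℕ, HasLinearIndexCode E ℓ → minrk2 E ≤ ℓ :=
  minLinearIndexCodeLength_eq_minrk2_general (ZMod 2) E hirr
end

section
/- For every side-information digraph E on Fin n and every n×n matrix A over ZMod 2 that fits E, there exists a linear index code for E whose length equals the ZMod 2 rank of A. -/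
/-!
Encode `x` by the coordinates of `A *ᵥ x` in a basis of the column space of `A`. Two messages with
the same codeword that agree on the side information of client `i` differ by some `z` in the kernel
of `A` that vanishes on it. Row `i` of `A` is supported on `i` and the side information, so row `i`
of `A *ᵥ z = 0` reads `A i i * z i = 0`, whence `z i = 0`: the codeword and the side information
together determine `x i`.
-/

theorem exists_linearMap_fin_finrank_range_ker_eq {R M N : Type*} [Ring R] [StrongRankCondition R]
    [AddCommGroup M] [Module R M] [AddCommGroup N] [Module R N] (f : M →ₗ[R] N)
    [Module.Free R f.range] [Module.Finite R f.range] :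
    ∃ g : M →ₗ[R] (Fin (Module.finrank R f.range) → R), g.ker = f.ker := by
  let coords := (Module.finBasis R f.range).equivFun
  exact ⟨coords.toLinearMap ∘ₗ f.rangeRestrict,
    (coords.ker_comp f.rangeRestrict).trans f.ker_rangeRestrict⟩

theorem exists_decoder_of_forall_mem_ker {R N ι : Type*} [Ring R] [AddCommGroup N] [Module R N]
    (f : (ι → R) →ₗ[R] N) (p : ι → Prop) (i : ι)
    (h : ∀ z ∈ f.ker, (∀ j, p j → z j = 0) → z i = 0) :
    ∃ dec : N → ({j // p j} → R) → R, ∀ x, dec (f x) (fun j => x j) = x i := by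
  have determined : (fun x : ι → R => x i).FactorsThrough
      fun x => (f x, fun j : {j // p j} => x j) := by
    intro x y hxy
    obtain ⟨hcode, hside⟩ := Prod.mk.inj hxy
    refine sub_eq_zero.mp (h (x - y) (LinearMap.sub_mem_ker_iff.mpr hcode) fun j hj => ?_)
    exact sub_eq_zero.mpr (congrFun hside ⟨j, hj⟩)
  obtain ⟨dec, hdec⟩ := (Function.factorsThrough_iff _).mp determined
  exact ⟨Function.curry dec, fun x => (congrFun hdec x).symm⟩

theorem apply_eq_zero_of_dotProduct_eq_zero {R ι : Type*} [NonUnitalNonAssocSemiring R]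
    [NoZeroDivisors R] [Fintype ι] {p : ι → Prop} {a z : ι → R} {i : ι} (hai : a i ≠ 0)
    (ha : ∀ j, i ≠ j → ¬p j → a j = 0) (hz : ∀ j, p j → z j = 0) (haz : a ⬝ᵥ z = 0) :
    z i = 0 := by
  have off_diagonal : ∀ j, j ≠ i → a j * z j = 0 := by
    intro j hj
    by_cases hp : p j
    · rw [hz j hp, mul_zero]
    · rw [ha j hj.symm hp, zero_mul]
  have diagonal : a i * z i = 0 := (Fintype.sum_eq_single i off_diagonal).symm.trans haz
  exact (mul_eq_zero.mp diagonal).resolve_left hai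

theorem hasLinearIndexCode_of_fits_general {R ι : Type*} [CommRing R] [IsDomain R]
    [IsPrincipalIdealRing R] [Fintype ι] (E : ι → ι → Prop) (A : Matrix ι ι R)
    (hdiag : ∀ i, A i i ≠ 0) (hoff : ∀ i j, i ≠ j → ¬E i j → A i j = 0) :
    ∃ (Enc : (ι → R) →ₗ[R] (Fin A.rank → R))
      (Dec : (i : ι) → (Fin A.rank → R) → ({j // E i j} → R) → R),
      ∀ x i, Dec i (Enc x) (fun j => x j) = x i := by
  obtain ⟨Enc, hker⟩ : ∃ Enc : (ι → R) →ₗ[R] (Fin A.rank → R), Enc.ker = A.mulVecLin.ker :=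
    exists_linearMap_fin_finrank_range_ker_eq A.mulVecLin
  have determined (i : ι) : ∀ z ∈ Enc.ker, (∀ j, E i j → z j = 0) → z i = 0 := by
    intro z hz hside
    have hAz : A.mulVec z = 0 := by rwa [hker, LinearMap.mem_ker, Matrix.mulVecLin_apply] at hz
    exact apply_eq_zero_of_dotProduct_eq_zero (hdiag i) (hoff i) hside (congrFun hAz i)
  choose Dec hDec using fun i => exists_decoder_of_forall_mem_ker Enc (E i) i (determined i)
  exact ⟨Enc, Dec, fun x i => hDec i x⟩

/-- For every matrix `A` fitting the side-information digraph `E`, there is a linear index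
code for `E` whose length equals the `ZMod 2` rank of `A`. -/
theorem hasLinearIndexCode_of_fits
    (n : ℕ) (hn : 1 ≤ n) (E : Fin n → Fin n → Prop) (hirr : ∀ i, ¬E i i)
    (A : Matrix (Fin n) (Fin n) (ZMod 2)) (hA : Fits E A) :
    HasLinearIndexCode E A.rank := by
  obtain ⟨Enc, Dec, hDec⟩ :=
    hasLinearIndexCode_of_fits_general E A (fun i => hA.1 i ▸ one_ne_zero) hA.2
  exact ⟨Enc, Enc.isLinear, Dec, hDec⟩
end

section
/- Let E be a side-information digraph on Fin n and let S ⊆ Fin n be an independent set of E, i.e., ¬E i j for all distinct i, j ∈ S. Then every index code for E (not necessarily linear) has length at least |S|. -/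
/-!
If two messages have the same encoding and agree on the side information of client `i`, they agree
at `i`. Let `S` be a set of clients without directed cycles. Two messages with the same encoding
that agree off `S` then agree on `S` as well: go through the clients of `S` one at a time, each
after those whose messages it knows. Hence the `2 ^ #S` messages with prescribed entries off `S`
have distinct encodings among the `2 ^ ℓ` code words. An independent set has no directed cycles.
-/

namespace IsIndexCode

variable {n ℓ : ℕ} {E : Fin n → Fin n → Prop} {Enc : (Fin n → ZMod 2) → (Fin ℓ → ZMod 2)}
  {x y : Fin n → ZMod 2}

theorem apply_eq_of_eqOn (h : IsIndexCode E Enc) (hEnc : Enc x = Enc y) {i : Fin n}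
    (hside : Set.EqOn x y {j | E i j}) : x i = y i := by
  obtain ⟨Dec, hDec⟩ := h
  calc
    x i = Dec i (Enc x) (fun j ↦ x j.1) := (hDec x i).symm
    _ = Dec i (Enc y) (fun j ↦ y j.1) := by
      rw [hEnc, funext fun j : {j // E i j} ↦ hside j.2]
    _ = y i := hDec y i

theorem eq_of_eqOn_compl (h : IsIndexCode E Enc) {S : Set (Fin n)}
    (hS : S.WellFoundedOn fun j i ↦ E i j) (hEnc : Enc x = Enc y) (hxy : Set.EqOn x y Sᶜ) :
    x = y := by
  have hxyS (i : Fin n) (hi : i ∈ S) : x i = y i := by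
    refine hS.induction hi fun i _ ih ↦ h.apply_eq_of_eqOn hEnc fun j (hij : E i j) ↦ ?_
    by_cases hj : j ∈ S
    · exact ih j hj hij
    · exact hxy hj
  exact funext fun i ↦ (em (i ∈ S)).elim (hxyS i) fun hi ↦ hxy hi

end IsIndexCode

theorem card_pow_le_card_of_injOn_eqOn_compl {ι α β : Type*} [Fintype α] [Fintype β]
    {f : (ι → α) → β} (S : Finset ι) (a : ι → α)
    (hf : Set.InjOn f {x | Set.EqOn x a (↑S : Set ι)ᶜ}) :
    Fintype.card α ^ S.card ≤ Fintype.card β := by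
  classical
  let extend (y : S → α) : ι → α := Function.extend Subtype.val y a
  have hextend (y : S → α) : Set.EqOn (extend y) a (↑S : Set ι)ᶜ := fun j hj ↦
    Function.extend_apply' y a j fun ⟨i, hij⟩ ↦ hj (hij ▸ i.2)
  have hinj : Function.Injective (f ∘ extend) := fun y z hyz ↦
    Function.extend_injective Subtype.val_injective a (hf (hextend y) (hextend z) hyz)
  simpa only [Fintype.card_fun, Fintype.card_coe] using Fintype.card_le_of_injective _ hinj

theorem wellFoundedOn_of_forall_not {α : Type*} {r : α → α → Prop} {s : Set α}
    (h : ∀ a ∈ s, ∀ b ∈ s, ¬r a b) : s.WellFoundedOn r :=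
  ⟨fun b ↦ ⟨b, fun a hab ↦ (h a a.2 b b.2 hab).elim⟩⟩

/-- On the finite set `S`, well-foundedness says that `E` has no directed cycle inside `S`; this
is the maximum acyclic induced subgraph bound. -/
theorem indepSet_le_indexCodeLength_general {n ℓ : ℕ} {E : Fin n → Fin n → Prop}
    {S : Finset (Fin n)} (hS : (S : Set (Fin n)).WellFoundedOn fun j i ↦ E i j)
    (hcode : HasIndexCode E ℓ) : S.card ≤ ℓ := by
  obtain ⟨Enc, hEnc⟩ := hcode
  have hinj : Set.InjOn Enc {x | Set.EqOn x 0 (S : Set (Fin n))ᶜ} := fun _ hx _ hy hxy ↦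
    hEnc.eq_of_eqOn_compl hS hxy (hx.trans hy.symm)
  have hpow : 2 ^ S.card ≤ 2 ^ ℓ := by
    simpa only [Fintype.card_fun, ZMod.card, Fintype.card_fin] using
      card_pow_le_card_of_injOn_eqOn_compl S 0 hinj
  exact (Nat.pow_le_pow_iff_right Nat.one_lt_two).mp hpow

/-- Every index code (not necessarily linear) for a side-information digraph `E` has length
at least the size of any independent set of `E`. -/
theorem indepSet_le_indexCodeLength
    (n : ℕ) (hn : 1 ≤ n) (E : Fin n → Fin n → Prop) (hirr : ∀ i, ¬E i i)
    (S : Finset (Fin n)) (hS : ∀ i ∈ S, ∀ j ∈ S, i ≠ j → ¬E i j)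
    (ℓ : ℕ) (hcode : HasIndexCode E ℓ) :
    S.card ≤ ℓ := by
  have hindep (j : Fin n) (hj : j ∈ S) (i : Fin n) (hi : i ∈ S) (hij : E i j) : False :=
    hS i hi j hj (fun h ↦ hirr i (h ▸ hij)) hij
  exact indepSet_le_indexCodeLength_general (wellFoundedOn_of_forall_not hindep) hcode
end

section
/- Let E be a side-information digraph on Fin n and suppose Fin n can be partitioned into m pairwise disjoint cliques of E (sets S with E i j for all distinct i, j ∈ S). Then there exists a linear index code for E of length m, namely the code whose m transmitted symbols are the XOR (sum over ZMod 2) of the messages in each clique. -/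
theorem isLinearMap_finset_sums (R : Type*) {M ι κ : Type*} [Semiring R] [AddCommMonoid M]
    [Module R M] (P : κ → Finset ι) :
    IsLinearMap R (fun (x : ι → M) (a : κ) => ∑ i ∈ P a, x i) where
  map_add _ _ := funext fun _ => Finset.sum_add_distrib
  map_smul _ _ := funext fun _ => by simp only [Pi.smul_apply, Finset.smul_sum]

theorem sum_sub_sum_subtype_erase {ι M : Type*} [DecidableEq ι] [AddCommGroup M]
    {s : Finset ι} {i : ι} (hi : i ∈ s) {p : ι → Prop} [DecidablePred p]
    (hp : ∀ j ∈ s, i ≠ j → p j) (x : ι → M) :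
    ∑ j ∈ s, x j - ∑ j ∈ (s.erase i).subtype p, x j = x i := by
  have known : ∀ j ∈ s.erase i, p j := fun j hj =>
    hp j (Finset.mem_of_mem_erase hj) (Finset.ne_of_mem_erase hj).symm
  rw [Finset.sum_subtype_of_mem x known, ← Finset.add_sum_erase s x hi, add_sub_cancel_right]

/-- Client `i` subtracts from the symbol of a set containing `i` the other summands, all of which
are side information of `i`. -/
theorem isIndexCode_finset_sums {n m : ℕ} {E : Fin n → Fin n → Prop} {P : Fin m → Finset (Fin n)}
    (h : ∀ i, ∃ a, i ∈ P a ∧ ∀ j ∈ P a, i ≠ j → E i j) :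
    IsIndexCode E (fun x a => ∑ i ∈ P a, x i) := by
  classical
  choose a mem_a known using h
  exact ⟨fun i y z => y (a i) - ∑ j ∈ ((P (a i)).erase i).subtype (E i), z j,
    fun x i => sum_sub_sum_subtype_erase (mem_a i) (known i) x⟩

theorem cliquePartition_gives_linear_indexCode_general {n m : ℕ} {E : Fin n → Fin n → Prop}
    {P : Fin m → Finset (Fin n)} (h : ∀ i, ∃ a, i ∈ P a ∧ ∀ j ∈ P a, i ≠ j → E i j) :
    IsLinearMap (ZMod 2) (fun (x : Fin n → ZMod 2) (a : Fin m) => ∑ i ∈ P a, x i) ∧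
      IsIndexCode E (fun (x : Fin n → ZMod 2) (a : Fin m) => ∑ i ∈ P a, x i) ∧
      HasLinearIndexCode E m :=
  have linear := isLinearMap_finset_sums (ZMod 2) P
  have decodable := isIndexCode_finset_sums h
  ⟨linear, decodable, _, linear, decodable⟩

/-- If `Fin n` is partitioned into `m` pairwise disjoint cliques of the side-information
digraph `E`, then the map transmitting, for each clique, the XOR (sum over `ZMod 2`) of the
messages in that clique is a linear index code for `E` of length `m`. -/
theorem cliquePartition_gives_linear_indexCode
    (n m : ℕ) (hn : 1 ≤ n) (E : Fin n → Fin n → Prop) (hirr : ∀ i, ¬E i i)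
    (P : Fin m → Finset (Fin n))
    (hdisj : ∀ a b : Fin m, a ≠ b → Disjoint (P a) (P b))
    (hcover : ∀ i : Fin n, ∃ a : Fin m, i ∈ P a)
    (hclique : ∀ a : Fin m, ∀ i ∈ P a, ∀ j ∈ P a, i ≠ j → E i j) :
    IsLinearMap (ZMod 2) (fun (x : Fin n → ZMod 2) (a : Fin m) => ∑ i ∈ P a, x i) ∧
      IsIndexCode E (fun (x : Fin n → ZMod 2) (a : Fin m) => ∑ i ∈ P a, x i) ∧
      HasLinearIndexCode E m :=
  cliquePartition_gives_linear_indexCode_general fun i =>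
    (hcover i).imp fun a hi => ⟨hi, hclique a i hi⟩
end

section
/- Let E be a side-information digraph on Fin n. Then (i) for every independent set S of E (¬E i j for all distinct i, j ∈ S) and every matrix A fitting E, the ZMod 2 rank of A is at least |S|, so the maximum size of an independent set of E is at most minrk₂(E); and (ii) whenever Fin n can be partitioned into m pairwise disjoint cliques of E, one has minrk₂(E) ≤ m; hence the maximum independent set size of E ≤ minrk₂(E) ≤ the minimum number of cliques of E needed to partition Fin n. -/
/-! The two bounds are dual uses of the identity matrix: an independent set selects an identity
submatrix of every fitting matrix, while a labelling of the vertices by cliques pulls the identity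
matrix on the labels back to a fitting matrix. Passing to a submatrix, even one with repeated rows
and columns, does not increase the rank. -/

section Minrank

variable {V R : Type*}

/-- The notion `Fits` for an arbitrary vertex type and arbitrary entries: `A` represents the digraph
`E` by ones on the diagonal and zeros at the off-diagonal non-edges. -/
def FitsDigraph [Zero R] [One R] (E : V → V → Prop) (A : Matrix V V R) : Prop :=
  (∀ i, A i i = 1) ∧ ∀ i j, i ≠ j → ¬E i j → A i j = 0

variable (R) in
/-- The minrank of a digraph over `R`, i.e. the least rank of a matrix over `R` fitting it; for
`V = Fin n` and `R = ZMod 2` it unfolds to `minrk2`. -/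
noncomputable def minrank [Fintype V] [CommSemiring R] (E : V → V → Prop) : ℕ :=
  sInf {r : ℕ | ∃ A : Matrix V V R, FitsDigraph E A ∧ A.rank = r}

theorem FitsDigraph.submatrix_eq_one [Zero R] [One R] {ι : Type*} [DecidableEq ι]
    {E : V → V → Prop} {A : Matrix V V R} (hA : FitsDigraph E A) {r : ι → V}
    (hr : Function.Injective r) (hindep : Pairwise fun a b => ¬E (r a) (r b)) :
    A.submatrix r r = 1 := by
  ext a b
  obtain rfl | hab := eq_or_ne a b
  · rw [Matrix.submatrix_apply, hA.1, Matrix.one_apply_eq]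
  · rw [Matrix.submatrix_apply, hA.2 _ _ (hr.ne hab) (hindep hab), Matrix.one_apply_ne hab]

theorem fitsDigraph_one_submatrix [Zero R] [One R] {κ : Type*} [DecidableEq κ]
    {E : V → V → Prop} {f : V → κ} (hf : Pairwise fun i j => f i = f j → E i j) :
    FitsDigraph E ((1 : Matrix κ κ R).submatrix f f) :=
  ⟨fun _ => Matrix.one_apply_eq _, fun _ _ hij hE => Matrix.one_apply_ne (mt (hf hij) hE)⟩

theorem fitsDigraph_one [Zero R] [One R] [DecidableEq V] (E : V → V → Prop) :
    FitsDigraph E (1 : Matrix V V R) :=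
  ⟨Matrix.one_apply_eq, fun _ _ hij _ => Matrix.one_apply_ne hij⟩

variable [Fintype V] [CommSemiring R] {E : V → V → Prop}

theorem minrank_le_rank {A : Matrix V V R} (hA : FitsDigraph E A) : minrank R E ≤ A.rank :=
  Nat.sInf_le ⟨A, hA, rfl⟩

theorem le_minrank {k : ℕ} (hk : ∀ A : Matrix V V R, FitsDigraph E A → k ≤ A.rank) :
    k ≤ minrank R E := by
  classical
  refine le_csInf ⟨_, 1, fitsDigraph_one E, rfl⟩ ?_
  rintro _ ⟨A, hA, rfl⟩
  exact hk A hA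

variable [StrongRankCondition R]

theorem FitsDigraph.card_le_rank {A : Matrix V V R} (hA : FitsDigraph E A) {S : Finset V}
    (hS : (S : Set V).Pairwise fun i j => ¬E i j) : S.card ≤ A.rank := by
  classical
  let incl : S → V := Subtype.val
  have hincl : Function.Injective incl := Subtype.val_injective
  have hindep : Pairwise fun i j => ¬E (incl i) (incl j) := fun i j hij =>
    hS i.2 j.2 (hincl.ne hij)
  calc
    S.card = (1 : Matrix S S R).rank := by rw [Matrix.rank_one, Fintype.card_coe]
    _ = (A.submatrix incl incl).rank := by rw [hA.submatrix_eq_one hincl hindep]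
    _ ≤ A.rank := A.rank_submatrix_le incl incl

theorem minrank_le_card_of_pairwise {κ : Type*} [Fintype κ] {f : V → κ}
    (hf : Pairwise fun i j => f i = f j → E i j) : minrank R E ≤ Fintype.card κ := by
  classical
  calc
    minrank R E ≤ ((1 : Matrix κ κ R).submatrix f f).rank :=
      minrank_le_rank (fitsDigraph_one_submatrix hf)
    _ ≤ (1 : Matrix κ κ R).rank := Matrix.rank_submatrix_le _ f f
    _ = Fintype.card κ := Matrix.rank_one

theorem minrank_le_card_of_clique_cover {κ : Type*} [Fintype κ] {P : κ → Set V}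
    (hcover : ∀ i, ∃ a, i ∈ P a) (hclique : ∀ a, (P a).Pairwise E) :
    minrank R E ≤ Fintype.card κ := by
  choose f hf using hcover
  have hfiber : Pairwise fun i j => f i = f j → E i j := fun i j hij hfij =>
    hclique (f i) (hf i) (hfij ▸ hf j) hij
  exact minrank_le_card_of_pairwise hfiber

variable (R E) in
theorem indep_le_minrk2_le_cliquePartition_general :
    (∀ S : Finset V, (S : Set V).Pairwise (fun i j => ¬E i j) →
      ∀ A : Matrix V V R, FitsDigraph E A → S.card ≤ A.rank) ∧
    (∀ S : Finset V, (S : Set V).Pairwise (fun i j => ¬E i j) → S.card ≤ minrank R E) ∧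
    (∀ {κ : Type*} [Fintype κ] (P : κ → Set V), (∀ i, ∃ a, i ∈ P a) →
      (∀ a, (P a).Pairwise E) → minrank R E ≤ Fintype.card κ) :=
  ⟨fun _ hS _ hA => hA.card_le_rank hS,
    fun _ hS => le_minrank fun _ hA => hA.card_le_rank hS,
    fun _ => minrank_le_card_of_clique_cover⟩

end Minrank

/-- Sandwich bounds for `minrk₂`: (i) any independent set of `E` has size at most the rank of
any matrix fitting `E`, hence at most `minrk₂(E)`; (ii) if `Fin n` is partitioned into `m`
pairwise disjoint cliques of `E` then `minrk₂(E) ≤ m`. -/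
theorem indep_le_minrk2_le_cliquePartition
    (n : ℕ) (hn : 1 ≤ n) (E : Fin n → Fin n → Prop) (hirr : ∀ i, ¬E i i) :
    (∀ S : Finset (Fin n), (∀ i ∈ S, ∀ j ∈ S, i ≠ j → ¬E i j) →
      ∀ A : Matrix (Fin n) (Fin n) (ZMod 2), Fits E A → S.card ≤ A.rank) ∧
    (∀ S : Finset (Fin n), (∀ i ∈ S, ∀ j ∈ S, i ≠ j → ¬E i j) → S.card ≤ minrk2 E) ∧
    (∀ (m : ℕ) (P : Fin m → Finset (Fin n)),
      (∀ a b : Fin m, a ≠ b → Disjoint (P a) (P b)) →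
      (∀ i : Fin n, ∃ a : Fin m, i ∈ P a) →
      (∀ a : Fin m, ∀ i ∈ P a, ∀ j ∈ P a, i ≠ j → E i j) →
      minrk2 E ≤ m) := by
  obtain ⟨hrank, hminrk, hcover⟩ := indep_le_minrk2_le_cliquePartition_general (ZMod 2) E
  exact ⟨hrank, hminrk, fun m P _ hP hE => (hcover (P ·) hP hE).trans_eq (Fintype.card_fin m)⟩
end

section
/- Let E be a side-information digraph on Fin n that contains α pairwise vertex-disjoint directed cycles. Then there exists a linear index code for E of length n − α; in particular the minimal index code length satisfies ℓ*(E) ≤ n − α. -/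
/-!
Make the disjoint cycles the cycles of one permutation `σ`, and consider the words with entry
`x v - x (σ v)` at each vertex `v` moved by `σ` and `x v` at each fixed vertex. Client `v` knows
`x (σ v)`, hence recovers `x v` from entry `v`. Along a cycle of `σ` the entries telescope to zero,
so one entry per cycle is determined by the others and need not be transmitted.
-/

open Equiv Finset

section Combinatorics

variable {V ι : Type*} [DecidableEq V]

theorem exists_transversal_of_pairwiseDisjoint {s : Finset ι} {S : ι → Finset V}
    (hne : ∀ i ∈ s, (S i).Nonempty) (hdisj : (s : Set ι).PairwiseDisjoint S) :
    ∃ T : Finset V, #T = #s ∧ ∀ v ∈ T, ∃ i ∈ s, S i ∩ T = {v} := by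
  choose rep hrep using hne
  have eq_of_mem {i j : ι} (hi : i ∈ s) (hj : j ∈ s) (h : rep j hj ∈ S i) : j = i :=
    hdisj.elim_finset hj hi _ (hrep j hj) h
  refine ⟨s.attach.image fun i : s ↦ rep i i.2, ?_, fun v hv ↦ ?_⟩
  · rw [card_image_of_injective, card_attach]
    exact fun i j hij ↦ Subtype.ext (eq_of_mem j.2 i.2 (hij ▸ hrep j j.2))
  · obtain ⟨⟨i, hi⟩, -, rfl⟩ := mem_image.mp hv
    refine ⟨i, hi, Subset.antisymm (fun w hw ↦ ?_) (by simp [hrep, hv])⟩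
    obtain ⟨hwS, hwT⟩ := mem_inter.mp hw
    obtain ⟨⟨j, hj⟩, -, rfl⟩ := mem_image.mp hwT
    obtain rfl := eq_of_mem hi hj hwS
    exact mem_singleton_self _

variable [Fintype V]

theorem exists_perm_of_pairwise_disjoint_isCycle [Fintype ι] {c : ι → Perm V}
    (hc : ∀ a, (c a).IsCycle) (hdisj : Pairwise fun a b ↦ (c a).Disjoint (c b)) :
    ∃ σ : Perm V, #σ.cycleFactorsFinset = Fintype.card ι ∧
      ∀ v ∈ σ.support, ∃ a, v ∈ (c a).support ∧ σ v = c a v := by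
  set l : List (Perm V) := (univ : Finset ι).toList.map c with hl
  have hcycle : ∀ f ∈ l, f.IsCycle := by simpa [hl] using hc
  have hpair : l.Pairwise Perm.Disjoint :=
    List.pairwise_map.mpr ((nodup_toList _).imp fun hab ↦ hdisj hab)
  have hnodup : l.Nodup :=
    Perm.nodup_of_pairwise_disjoint_cycles hcycle hpair
  refine ⟨l.prod, ?_, fun v hv ↦ ?_⟩
  · rw [(Perm.cycleFactorsFinset_eq_list_toFinset hnodup).mpr ⟨hcycle, hpair, rfl⟩,
      List.toFinset_card_of_nodup hnodup, hl, List.length_map, length_toList, card_univ]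
  · obtain ⟨f, hf, hvf⟩ := Perm.exists_mem_support_of_mem_support_prod hv
    obtain ⟨a, -, rfl⟩ := List.mem_map.mp hf
    exact ⟨a, hvf, (Perm.eq_on_support_mem_disjoint hf hpair v hvf).symm⟩

theorem exists_perm_of_disjoint_directedCycles [Fintype ι] {E : V → V → Prop} {cyc : ι → List V}
    (hlen : ∀ a, 2 ≤ (cyc a).length) (hnodup : ∀ a, (cyc a).Nodup)
    (hedge : ∀ a (t : Fin (cyc a).length),
      E ((cyc a).get t) ((cyc a).get ⟨(t.1 + 1) % (cyc a).length, Nat.mod_lt _ t.pos⟩))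
    (hdisj : Pairwise fun a b ↦ (cyc a).Disjoint (cyc b)) :
    ∃ σ : Perm V, #σ.cycleFactorsFinset = Fintype.card ι ∧ ∀ v ∈ σ.support, E v (σ v) := by
  obtain ⟨σ, hcard, hσ⟩ := exists_perm_of_pairwise_disjoint_isCycle
    (fun a ↦ List.isCycle_formPerm (hnodup a) (hlen a)) fun a b hab ↦
      (List.formPerm_disjoint_iff (hnodup a) (hnodup b) (hlen a) (hlen b)).mpr (hdisj hab)
  refine ⟨σ, hcard, fun v hv ↦ ?_⟩
  obtain ⟨a, hva, hσv⟩ := hσ v hv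
  have hmem : v ∈ cyc a := List.mem_toFinset.mp (List.support_formPerm_le _ hva)
  obtain ⟨t, ht, rfl⟩ := List.getElem_of_mem hmem
  rw [hσv, List.formPerm_apply_getElem _ (hnodup a)]
  exact hedge a ⟨t, ht⟩

end Combinatorics

section Decoding

variable {V R M W : Type*}

/-- The index-coding condition without decoders, for messages in an arbitrary alphabet `M`: the
word `f x` and the side information `{j | E i j}` of client `i` determine the message `x i`. -/
def DeterminesMessages (E : V → V → Prop) (f : (V → M) → W) : Prop :=
  ∀ i ⦃x y : V → M⦄, f x = f y → (∀ j, E i j → x j = y j) → x i = y i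

theorem determinesMessages_linearMap_iff [Semiring R] [AddCommGroup M] [Module R M]
    [AddCommGroup W] [Module R W] {E : V → V → Prop} {f : (V → M) →ₗ[R] W} :
    DeterminesMessages E f ↔ ∀ i z, f z = 0 → (∀ j, E i j → z j = 0) → z i = 0 := by
  refine ⟨fun h i z hz hside ↦ h i (hz.trans f.map_zero.symm) hside, fun h i x y hxy hside ↦ ?_⟩
  exact sub_eq_zero.mp (h i (x - y) (by rw [map_sub, hxy, sub_self])
    fun j hj ↦ sub_eq_zero.mpr (hside j hj))

theorem isIndexCode_iff_determinesMessages {n ℓ : ℕ} {E : Fin n → Fin n → Prop}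
    {Enc : (Fin n → ZMod 2) → (Fin ℓ → ZMod 2)} :
    IsIndexCode E Enc ↔ DeterminesMessages E Enc := by
  constructor
  · rintro ⟨Dec, hDec⟩ i x y hxy hside
    rw [← hDec x i, ← hDec y i, hxy, funext fun j : {j // E i j} ↦ hside j j.2]
  · intro h
    have factors (i : Fin n) : Function.FactorsThrough (fun x : Fin n → ZMod 2 ↦ x i)
        fun x ↦ (Enc x, fun j : {j // E i j} ↦ x j) := fun x y hxy ↦
      h i (congrArg Prod.fst hxy) fun j hj ↦ congrFun (congrArg Prod.snd hxy) ⟨j, hj⟩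
    choose Dec hDec using fun i ↦ (Function.factorsThrough_iff _).mp (factors i)
    exact ⟨fun i y w ↦ Dec i (y, w), fun x i ↦ (congrFun (hDec i) x).symm⟩

theorem hasLinearIndexCode_iff_exists_determinesMessages {n ℓ : ℕ} {E : Fin n → Fin n → Prop} :
    HasLinearIndexCode E ℓ ↔
      ∃ Enc : (Fin n → ZMod 2) →ₗ[ZMod 2] (Fin ℓ → ZMod 2), DeterminesMessages E Enc := by
  constructor
  · rintro ⟨Enc, hlin, hEnc⟩
    exact ⟨hlin.mk' Enc, isIndexCode_iff_determinesMessages.mp hEnc⟩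
  · rintro ⟨Enc, hEnc⟩
    exact ⟨Enc, Enc.isLinear, isIndexCode_iff_determinesMessages.mpr hEnc⟩

theorem HasLinearIndexCode.minIndexCodeLength_le {n ℓ : ℕ} {E : Fin n → Fin n → Prop}
    (h : HasLinearIndexCode E ℓ) : minIndexCodeLength E ≤ ℓ :=
  let ⟨Enc, _, hEnc⟩ := h
  Nat.sInf_le ⟨Enc, hEnc⟩

end Decoding

section CycleDifference

variable {V R M : Type*} [DecidableEq V] [Semiring R] [AddCommGroup M] [Module R M]

variable (R M) in
/-- The redundant code of a permutation `σ`: each vertex moved by `σ` contributes the difference of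
its message and that of its successor, each fixed vertex its own message. -/
def cycleDifference (σ : Perm V) : (V → M) →ₗ[R] (V → M) :=
  LinearMap.pi fun v ↦
    let proj : V → (V → M) →ₗ[R] M := LinearMap.proj
    if σ v = v then proj v else proj v - proj (σ v)

theorem cycleDifference_apply_of_fixed {σ : Perm V} {v : V} (hv : σ v = v) (x : V → M) :
    cycleDifference R M σ x v = x v := by
  simp [cycleDifference, hv]

theorem cycleDifference_apply_of_moved {σ : Perm V} {v : V} (hv : σ v ≠ v) (x : V → M) :
    cycleDifference R M σ x v = x v - x (σ v) := by
  simp [cycleDifference, hv]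

variable [Fintype V] {σ : Perm V}

theorem sum_cycleDifference_eq_zero {c : Perm V} (hc : c ∈ σ.cycleFactorsFinset) (x : V → M) :
    ∑ v ∈ c.support, cycleDifference R M σ x v = 0 := by
  have apply_eq (v : V) (hv : v ∈ c.support) :
      cycleDifference R M σ x v = x v - x (c v) := by
    have hcv : c v = σ v := (Perm.mem_cycleFactorsFinset_iff.mp hc).2 v hv
    rw [hcv, cycleDifference_apply_of_moved (hcv ▸ Perm.mem_support.mp hv)]
  rw [sum_congr rfl apply_eq, sum_sub_distrib, sub_eq_zero]
  exact (Perm.sum_comp c c.support x fun v hv ↦ Perm.mem_support.mpr hv).symm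

theorem determinesMessages_cycleDifference {E : V → V → Prop} (hσ : ∀ v ∈ σ.support, E v (σ v)) :
    DeterminesMessages E (cycleDifference R M σ) := by
  refine determinesMessages_linearMap_iff.mpr fun v z hz hside ↦ ?_
  have hzv : cycleDifference R M σ z v = 0 := congrFun hz v
  by_cases hv : σ v = v
  · rwa [cycleDifference_apply_of_fixed hv] at hzv
  · rwa [cycleDifference_apply_of_moved hv, hside _ (hσ v (Perm.mem_support.mpr hv)),
      sub_zero] at hzv

variable (R M σ) in
theorem exists_cycleDifference_redundant_entries : ∃ T : Finset V, #T = #σ.cycleFactorsFinset ∧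
    ∀ z : V → M, (∀ v ∉ T, cycleDifference R M σ z v = 0) → cycleDifference R M σ z = 0 := by
  have support_nonempty (c) (hc : c ∈ σ.cycleFactorsFinset) : c.support.Nonempty :=
    (Perm.mem_cycleFactorsFinset_iff.mp hc).1.nonempty_support
  have support_disjoint :
      (σ.cycleFactorsFinset : Set (Perm V)).PairwiseDisjoint Perm.support :=
    σ.cycleFactorsFinset_pairwise_disjoint.mono' fun _ _ ↦ Perm.Disjoint.disjoint_support
  obtain ⟨T, hcard, hT⟩ := exists_transversal_of_pairwiseDisjoint support_nonempty support_disjoint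
  refine ⟨T, hcard, fun z hz ↦ funext fun v ↦ ?_⟩
  by_cases hv : v ∈ T
  · obtain ⟨c, hc, hcT⟩ := hT v hv
    have hvc : v ∈ c.support := (mem_inter.mp (hcT ▸ mem_singleton_self v)).1
    have others_zero (w : V) (hwc : w ∈ c.support) (hwv : w ≠ v) :
        cycleDifference R M σ z w = 0 :=
      hz w fun hwT ↦ hwv (mem_singleton.mp (hcT ▸ mem_inter.mpr ⟨hwc, hwT⟩))
    exact (sum_eq_single_of_mem v hvc others_zero).symm.trans (sum_cycleDifference_eq_zero hc z)
  · exact hz v hv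

variable (R M) in
theorem exists_linearMap_determinesMessages_of_perm {E : V → V → Prop}
    (hσ : ∀ v ∈ σ.support, E v (σ v)) :
    ∃ Enc : (V → M) →ₗ[R] (Fin (Fintype.card V - #σ.cycleFactorsFinset) → M),
      DeterminesMessages E Enc := by
  obtain ⟨T, hcard, hT⟩ := exists_cycleDifference_redundant_entries R M σ
  let e : (Tᶜ : Finset V) ≃ Fin (Fintype.card V - #σ.cycleFactorsFinset) :=
    equivFinOfCardEq (by rw [card_compl, hcard])
  refine ⟨LinearMap.funLeft R M (fun k ↦ (e.symm k : V)) ∘ₗ cycleDifference R M σ,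
    determinesMessages_linearMap_iff.mpr fun i z hz ↦ ?_⟩
  refine determinesMessages_linearMap_iff.mp (determinesMessages_cycleDifference (R := R) hσ) i z
    (hT z fun v hv ↦ ?_)
  simpa [LinearMap.funLeft_apply] using congrFun hz (e ⟨v, mem_compl.mpr hv⟩)

end CycleDifference

theorem vertexDisjointCycles_indexCode_bound_general {V ι : Type*} (R M : Type*)
    [Fintype V] [Fintype ι] [Semiring R] [AddCommGroup M] [Module R M]
    {E : V → V → Prop} {cyc : ι → List V}
    (hlen : ∀ a, 2 ≤ (cyc a).length) (hnodup : ∀ a, (cyc a).Nodup)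
    (hedge : ∀ a (t : Fin (cyc a).length),
      E ((cyc a).get t) ((cyc a).get ⟨(t.1 + 1) % (cyc a).length, Nat.mod_lt _ t.pos⟩))
    (hdisj : Pairwise fun a b ↦ (cyc a).Disjoint (cyc b)) :
    ∃ Enc : (V → M) →ₗ[R] (Fin (Fintype.card V - Fintype.card ι) → M),
      DeterminesMessages E Enc := by
  classical
  obtain ⟨σ, hcard, hσ⟩ := exists_perm_of_disjoint_directedCycles hlen hnodup hedge hdisj
  exact hcard ▸ exists_linearMap_determinesMessages_of_perm R M hσ

/-- If the side-information digraph `E` contains `α` pairwise vertex-disjoint directed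
cycles, then there is a linear index code for `E` of length `n - α`; in particular
`ℓ*(E) ≤ n - α`. -/
theorem vertexDisjointCycles_indexCode_bound
    (n : ℕ) (hn : 1 ≤ n) (E : Fin n → Fin n → Prop) (hirr : ∀ i, ¬E i i)
    (α : ℕ) (cyc : Fin α → List (Fin n))
    (hcyc : ∀ a : Fin α, IsDirCycle E (cyc a))
    (hdisj : ∀ a b : Fin α, a ≠ b → ∀ v : Fin n, v ∈ cyc a → v ∉ cyc b) :
    HasLinearIndexCode E (n - α) ∧ minIndexCodeLength E ≤ n - α := by
  have code : HasLinearIndexCode E (n - α) := by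
    simpa only [Fintype.card_fin] using hasLinearIndexCode_iff_exists_determinesMessages.mpr
      (vertexDisjointCycles_indexCode_bound_general (ZMod 2) (ZMod 2) (fun a ↦ (hcyc a).1)
        (fun a ↦ (hcyc a).2.1) (fun a ↦ (hcyc a).2.2) fun a b hab v ↦ hdisj a b hab v)
  exact ⟨code, code.minIndexCodeLength_le⟩
end

section
/- Let n ≥ 2 and let E be the directed n-cycle on Fin n, i.e., E i j holds if and only if j = i + 1 (mod n). Then the minimal index code length satisfies ℓ*(E) = n − 1. -/
/-!
Upper bound: broadcasting the `n - 1` sums `x 0 + x k`, `k ≠ 0`, determines the message up to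
adding the all-ones vector, so a client who knows any single coordinate knows them all.

Lower bound: if `E` has no directed cycle inside a set `S` of clients, freeze the messages outside
`S`. Starting from the clients with no side information in `S`, each message in `S` can be decoded
from the codeword and those already recovered, so the `2 ^ |S|` choices of the messages in `S` have
distinct codewords. Removing one vertex from a directed cycle leaves such a set.
-/

section

variable {n ℓ : ℕ} {E : Fin n → Fin n → Prop}

theorem isIndexCode_iff {Enc : (Fin n → ZMod 2) → (Fin ℓ → ZMod 2)} :
    IsIndexCode E Enc ↔
      ∀ i x y, Enc x = Enc y → (∀ j, E i j → x j = y j) → x i = y i := by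
  constructor
  · rintro ⟨Dec, hDec⟩ i x y henc hside
    have hrestrict : (fun j : {j // E i j} => x j) = fun j : {j // E i j} => y j :=
      funext fun j => hside j j.2
    rw [← hDec x i, ← hDec y i, henc, hrestrict]
  · intro h
    let observe (i : Fin n) (x : Fin n → ZMod 2) := (Enc x, fun j : {j // E i j} => x j)
    have hfactors (i : Fin n) :
        (fun x : Fin n → ZMod 2 => x i).FactorsThrough (observe i) := by
      intro x y hxy
      obtain ⟨henc, hside⟩ := Prod.mk.inj hxy
      exact h i x y henc fun j hj => congrFun hside ⟨j, hj⟩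
    exact ⟨fun i c s => Function.extend (observe i) (fun x => x i) 0 (c, s),
      fun x i => (hfactors i).extend_apply 0 x⟩

theorem IsIndexCode.eq_of_eqOn_compl_s7 {Enc : (Fin n → ZMod 2) → (Fin ℓ → ZMod 2)}
    (hEnc : IsIndexCode E Enc) {S : Set (Fin n)} (hS : S.WellFoundedOn (flip E))
    {x y : Fin n → ZMod 2} (henc : Enc x = Enc y) (hxy : Set.EqOn x y Sᶜ) : x = y := by
  classical
  have hxyS : Set.EqOn x y S := fun i hi =>
    hS.induction hi fun i _ ih =>
      isIndexCode_iff.1 hEnc i x y henc fun j hij =>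
        if hj : j ∈ S then ih j hj hij else hxy hj
  exact funext fun i => if hi : i ∈ S then hxyS hi else hxy hi

theorem HasIndexCode.ncard_le_of_wellFoundedOn (h : HasIndexCode E ℓ) {S : Set (Fin n)}
    (hS : S.WellFoundedOn (flip E)) : S.ncard ≤ ℓ := by
  obtain ⟨Enc, hEnc⟩ := h
  let extendZero (z : S → ZMod 2) : Fin n → ZMod 2 := Function.extend Subtype.val z 0
  have hinj : Function.Injective fun z => Enc (extendZero z) := by
    intro z w hzw
    have hcompl : Set.EqOn (extendZero z) (extendZero w) Sᶜ := by
      intro i hi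
      have hrange : ¬∃ s : S, s.1 = i := fun ⟨s, hs⟩ => hi (hs ▸ s.2)
      simp only [extendZero, Function.extend_apply' _ _ _ hrange]
    exact Function.extend_injective Subtype.val_injective _
      (hEnc.eq_of_eqOn_compl_s7 hS hzw hcompl)
  have hcard : 2 ^ S.ncard ≤ 2 ^ ℓ := by
    simpa [Nat.card_fun] using Nat.card_le_card_of_injective _ hinj
  exact (Nat.pow_le_pow_iff_right one_lt_two).1 hcard

end

theorem hasIndexCode_of_forall_exists {m : ℕ} {E : Fin (m + 1) → Fin (m + 1) → Prop}
    (hE : ∀ i, ∃ j, E i j) : HasIndexCode E m := by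
  refine ⟨fun x k => x 0 + x k.succ, isIndexCode_iff.2 fun i x y henc hside => ?_⟩
  have hsum : ∀ k, x 0 + x k = y 0 + y k :=
    Fin.cases (by simp only [CharTwo.add_self_eq_zero]) fun k => congrFun henc k
  obtain ⟨j, hij⟩ := hE i
  have hzero : x 0 = y 0 := add_right_cancel (hside j hij ▸ hsum j)
  exact add_left_cancel (hzero ▸ hsum i)

theorem wellFoundedOn_dirCycle_compl_zero (m : ℕ) :
    ({0}ᶜ : Set (Fin (m + 1))).WellFoundedOn
      (flip fun i j => (j : ℕ) = ((i : ℕ) + 1) % (m + 1)) := by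
  have hlt : ∀ j ∈ ({0}ᶜ : Set (Fin (m + 1))), ∀ i ∈ ({0}ᶜ : Set (Fin (m + 1))),
      (j : ℕ) = ((i : ℕ) + 1) % (m + 1) → j > i := by
    intro j hj i _ hij
    have hj0 : (j : ℕ) ≠ 0 := Fin.val_ne_zero_iff.2 hj
    rcases Nat.lt_succ_iff_lt_or_eq.1 i.isLt with hi | hi
    · rw [Nat.mod_eq_of_lt (by omega)] at hij
      exact Fin.lt_def.2 (by omega)
    · exact absurd (by simpa [hi] using hij) hj0
  exact wellFounded_gt.wellFoundedOn.mono' hlt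

/-- For the directed `n`-cycle (`n ≥ 2`), where client `i` knows exactly message `i + 1`
(mod `n`), the minimal index code length is `n - 1`. -/
theorem minIndexCodeLength_dirCycle
    (n : ℕ) (hn : 2 ≤ n) :
    minIndexCodeLength (fun i j : Fin n => (j : ℕ) = ((i : ℕ) + 1) % n) = n - 1 := by
  obtain ⟨m, rfl⟩ : ∃ m, n = m + 1 := ⟨n - 1, by omega⟩
  refine IsLeast.csInf_eq ⟨hasIndexCode_of_forall_exists fun i => ?_, fun ℓ hℓ => ?_⟩
  · exact ⟨⟨(i + 1) % (m + 1), Nat.mod_lt _ m.succ_pos⟩, rfl⟩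
  · have hcard := HasIndexCode.ncard_le_of_wellFoundedOn hℓ (wellFoundedOn_dirCycle_compl_zero m)
    rwa [Set.ncard_compl, Nat.card_fin, Set.ncard_singleton] at hcard
end

section
/- Let n ≥ 1 and let E be a side-information digraph on Fin n. Then the minimal index code length satisfies ℓ*(E) = 1 if and only if E is complete, i.e., E i j holds for all distinct i, j ∈ Fin n. -/
/-! The length `ℓ*(E)` is squeezed between two classical bounds. If `S` induces an acyclic
subgraph of `E`, then words supported on `S` can be decoded completely from the codeword, one
client at a time in a topological order, so `#S ≤ ℓ*(E)`. If the clients are partitioned into `ℓ`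
cliques, then transmitting the sum of the messages over each clique is an index code, so
`ℓ*(E) ≤ ℓ`. A single client is acyclic, a missing edge gives an acyclic set of two
clients, and a complete digraph is a single clique. -/

theorem wellFoundedOn_pair_of_not_rel {α : Type*} {r : α → α → Prop} {a b : α}
    (haa : ¬r a a) (hbb : ¬r b b) (hba : ¬r b a) : ({a, b} : Set α).WellFoundedOn r := by
  classical
  let rank : α → ℕ := fun c => if c = a then 0 else 1
  refine (InvImage.wf rank wellFounded_lt).wellFoundedOn.mono' ?_
  rintro c (rfl | rfl) d (rfl | rfl) hcd
  · exact absurd hcd haa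
  · have hdc : d ≠ c := by
      rintro rfl
      exact haa hcd
    simp [InvImage, rank, hdc]
  · exact absurd hcd hba
  · exact absurd hcd hbb

section IndexCode

variable {n ℓ : ℕ} {E : Fin n → Fin n → Prop}

theorem IsIndexCode.apply_eq_of_encode_eq {Enc : (Fin n → ZMod 2) → (Fin ℓ → ZMod 2)}
    (hEnc : IsIndexCode E Enc) {x y : Fin n → ZMod 2} (hxy : Enc x = Enc y) {i : Fin n}
    (hside : ∀ j, E i j → x j = y j) : x i = y i := by
  obtain ⟨Dec, hDec⟩ := hEnc
  have hrestrict : (fun j : {j // E i j} => x j.1) = fun j => y j.1 :=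
    funext fun j => hside j.1 j.2
  rw [← hDec x i, ← hDec y i, hxy, hrestrict]

theorem IsIndexCode.eq_of_encode_eq_of_wellFoundedOn
    {Enc : (Fin n → ZMod 2) → (Fin ℓ → ZMod 2)} (hEnc : IsIndexCode E Enc) {S : Set (Fin n)}
    (hS : S.WellFoundedOn fun j i => E i j) {x y : Fin n → ZMod 2} (hxy : Enc x = Enc y)
    (hcompl : ∀ i ∉ S, x i = y i) : x = y := by
  funext i
  by_cases hi : i ∈ S
  · refine hS.induction (P := fun i => x i = y i) hi fun i _ ih =>
      hEnc.apply_eq_of_encode_eq hxy fun j hij => ?_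
    by_cases hj : j ∈ S
    · exact ih j hj hij
    · exact hcompl j hj
  · exact hcompl i hi

-- As `S` is finite, the well-foundedness hypothesis says that `E` has no directed cycle inside `S`.
theorem HasIndexCode.card_le_of_wellFoundedOn (h : HasIndexCode E ℓ) {S : Finset (Fin n)}
    (hS : (S : Set (Fin n)).WellFoundedOn fun j i => E i j) : S.card ≤ ℓ := by
  obtain ⟨Enc, hEnc⟩ := h
  let extendByZero (x : S → ZMod 2) : Fin n → ZMod 2 := Function.extend Subtype.val x 0
  have hinj : Function.Injective (Enc ∘ extendByZero) := by
    intro x y hxy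
    have hext : extendByZero x = extendByZero y := by
      refine hEnc.eq_of_encode_eq_of_wellFoundedOn hS hxy fun i hi => ?_
      have hi' : ¬∃ a : S, a.1 = i := by
        rintro ⟨a, rfl⟩
        exact hi a.2
      simp only [extendByZero, Function.extend_apply' _ _ _ hi']
    exact Function.extend_injective Subtype.val_injective _ hext
  have hcard : 2 ^ S.card ≤ 2 ^ ℓ := by
    simpa using Fintype.card_le_of_injective _ hinj
  exact (Nat.pow_le_pow_iff_right one_lt_two).mp hcard

theorem hasIndexCode_of_cliqueCover (c : Fin n → Fin ℓ)
    (hc : ∀ i j, i ≠ j → c i = c j → E i j) : HasIndexCode E ℓ := by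
  let others (i : Fin n) : Finset (Fin n) := ({j | c j = c i} : Finset (Fin n)).erase i
  have adj_of_mem_others {i j : Fin n} (hj : j ∈ others i) : E i j := by
    obtain ⟨hji, hcj⟩ : j ≠ i ∧ c j = c i := by simpa [others] using hj
    exact hc i j hji.symm hcj.symm
  refine ⟨fun x k => ∑ j with c j = k, x j, fun i w s =>
    w (c i) - ∑ j : others i, s ⟨j, adj_of_mem_others j.2⟩, fun x i => ?_⟩
  have hsum : ∑ j with c j = c i, x j = ∑ j ∈ others i, x j + x i :=
    (Finset.sum_erase_add _ _ (by simp)).symm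
  change ∑ j with c j = c i, x j - ∑ j : others i, x j = x i
  rw [Finset.sum_coe_sort (others i) x, hsum, add_sub_cancel_left]

theorem hasIndexCode_minIndexCodeLength (E : Fin n → Fin n → Prop) :
    HasIndexCode E (minIndexCodeLength E) :=
  Nat.sInf_mem (s := {ℓ | HasIndexCode E ℓ})
    ⟨n, hasIndexCode_of_cliqueCover id fun _ _ hij hc => absurd hc hij⟩

theorem minIndexCodeLength_le_of_cliqueCover (c : Fin n → Fin ℓ)
    (hc : ∀ i j, i ≠ j → c i = c j → E i j) : minIndexCodeLength E ≤ ℓ :=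
  Nat.sInf_le (hasIndexCode_of_cliqueCover c hc)

theorem one_le_minIndexCodeLength {i : Fin n} (hi : ¬E i i) : 1 ≤ minIndexCodeLength E := by
  have hS : (({i} : Finset (Fin n)) : Set (Fin n)).WellFoundedOn fun j i => E i j := by
    simpa using wellFoundedOn_pair_of_not_rel (r := fun j i => E i j) hi hi hi
  simpa using (hasIndexCode_minIndexCodeLength E).card_le_of_wellFoundedOn hS

theorem two_le_minIndexCodeLength {i j : Fin n} (hne : i ≠ j) (hi : ¬E i i) (hj : ¬E j j)
    (hij : ¬E i j) : 2 ≤ minIndexCodeLength E := by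
  have hS : (({i, j} : Finset (Fin n)) : Set (Fin n)).WellFoundedOn fun j i => E i j := by
    simpa using wellFoundedOn_pair_of_not_rel (r := fun j i => E i j) hi hj hij
  simpa [hne] using (hasIndexCode_minIndexCodeLength E).card_le_of_wellFoundedOn hS

end IndexCode

/-- The minimal index code length of a side-information digraph `E` on `n ≥ 1` clients is `1`
if and only if `E` is complete. -/
theorem minIndexCodeLength_eq_one_iff_complete
    (n : ℕ) (hn : 1 ≤ n) (E : Fin n → Fin n → Prop) (hirr : ∀ i, ¬E i i) :
    minIndexCodeLength E = 1 ↔ ∀ i j : Fin n, i ≠ j → E i j := by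
  constructor
  · intro hlen i j hne
    by_contra hij
    have htwo := two_le_minIndexCodeLength hne (hirr i) (hirr j) hij
    omega
  · intro hcomplete
    apply le_antisymm
    · exact minIndexCodeLength_le_of_cliqueCover (fun _ => 0) fun i j hne _ => hcomplete i j hne
    · exact one_le_minIndexCodeLength (hirr ⟨0, hn⟩)
end

section
/- Let E be the side-information digraph on Fin 4 with E i j holding exactly for the pairs 1→4; 2→1, 2→3; 3→1, 3→2; 4→2, 4→3. Then every family of pairwise vertex-disjoint directed cycles of E has at most one element; hence the bound ℓ*(E) ≤ n − α obtained from vertex-disjoint directed cycles gives only ℓ*(E) ≤ 3 for this instance, while ℓ*(E) = 2. -/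
/-- The side-information digraph on 4 clients (0-indexed) given by the has-sets
`H₀ = {3}`, `H₁ = {0, 2}`, `H₂ = {0, 1}`, `H₃ = {1, 2}`. -/
def exampleDigraph4 : Fin 4 → Fin 4 → Prop := fun i j =>
  (i = 0 ∧ j = 3) ∨
  (i = 1 ∧ (j = 0 ∨ j = 2)) ∨
  (i = 2 ∧ (j = 0 ∨ j = 1)) ∨
  (i = 3 ∧ (j = 1 ∨ j = 2))

section Acyclic

variable {V : Type*}

/-- The subgraph of `E` induced on `S` has no directed cycle (loops included), encoded as: every
nonempty set of vertices of `S` has a sink. -/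
def IsAcyclicOn (E : V → V → Prop) (S : Finset V) : Prop :=
  ∀ T ⊆ S, T.Nonempty → ∃ i ∈ T, ∀ j ∈ T, ¬E i j

theorem isAcyclicOn_pair [DecidableEq V] {E : V → V → Prop} {i j : V} (hi : ¬E i i)
    (hj : ¬E j j) (hij : ¬(E i j ∧ E j i)) : IsAcyclicOn E {i, j} := by
  wlog h : ¬E i j generalizing i j
  · rw [Finset.pair_comm]
    exact this hj hi (fun e => hij e.symm) fun e => hij ⟨not_not.mp h, e⟩
  intro T hT hne
  by_cases hiT : i ∈ T
  · refine ⟨i, hiT, fun k hk => ?_⟩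
    rcases Finset.mem_insert.mp (hT hk) with rfl | hk
    · exact hi
    · rwa [Finset.mem_singleton.mp hk]
  · have hTj : T = {j} :=
      hne.subset_singleton_iff.mp ((Finset.subset_insert_iff_of_notMem hiT).mp hT)
    simpa [hTj] using hj

end Acyclic

section SideInformation

variable {n ℓ : ℕ} {E : Fin n → Fin n → Prop}

theorem IsDirCycle.exists_adj_mem {c : List (Fin n)} (hc : IsDirCycle E c) {v : Fin n}
    (hv : v ∈ c) : ∃ w ∈ c, E v w := by
  obtain ⟨t, rfl⟩ := List.get_of_mem hv
  exact ⟨_, List.get_mem _ _, hc.2.2 t⟩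

theorem IsAcyclicOn.not_toFinset_subset {S : Finset (Fin n)} (hS : IsAcyclicOn E S)
    {c : List (Fin n)} (hc : IsDirCycle E c) : ¬c.toFinset ⊆ S := by
  intro hcS
  have hne : c ≠ [] := List.ne_nil_of_length_pos (Nat.zero_lt_two.trans_le hc.1)
  obtain ⟨i, hi, hsink⟩ := hS _ hcS (List.toFinset_nonempty_iff c |>.mpr hne)
  obtain ⟨j, hj, hij⟩ := hc.exists_adj_mem (List.mem_toFinset.mp hi)
  exact hsink j (List.mem_toFinset.mpr hj) hij

theorem IsIndexCode.eq_of_isAcyclicOn {Enc : (Fin n → ZMod 2) → (Fin ℓ → ZMod 2)}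
    (hEnc : IsIndexCode E Enc) {S : Finset (Fin n)} (hS : IsAcyclicOn E S) {x y : Fin n → ZMod 2}
    (hxy : ∀ i ∉ S, x i = y i) (h : Enc x = Enc y) : x = y := by
  by_contra hne
  obtain ⟨i, hi, hsink⟩ := hS {i | x i ≠ y i}
    (fun i hi => by_contra fun hiS => (Finset.mem_filter.mp hi).2 (hxy i hiS))
    (by simpa [Finset.Nonempty] using Function.ne_iff.mp hne)
  simp only [Finset.mem_filter_univ] at hi hsink
  exact hi (isIndexCode_iff.mp hEnc i x y h fun j hij => by_contra fun hj => hsink j hj hij)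

theorem IsAcyclicOn.card_le_of_hasIndexCode {S : Finset (Fin n)} (hS : IsAcyclicOn E S)
    (h : HasIndexCode E ℓ) : S.card ≤ ℓ := by
  obtain ⟨Enc, hEnc⟩ := h
  let extendZero (x : S → ZMod 2) : Fin n → ZMod 2 := Function.extend Subtype.val x 0
  have hzero (x : S → ZMod 2) (i : Fin n) (hi : i ∉ S) : extendZero x i = 0 :=
    Function.extend_apply' _ _ _ fun ⟨j, hj⟩ => hi (hj ▸ j.2)
  have hinj : Function.Injective fun x => Enc (extendZero x) := fun x y hxy =>
    Function.extend_injective Subtype.val_injective (0 : Fin n → ZMod 2) <|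
      hEnc.eq_of_isAcyclicOn hS (fun i hi => (hzero x i hi).trans (hzero y i hi).symm) hxy
  have hcard : 2 ^ S.card ≤ 2 ^ ℓ := by
    simpa [ZMod.card] using Fintype.card_le_of_injective _ hinj
  exact (Nat.pow_le_pow_iff_right one_lt_two).mp hcard

end SideInformation

namespace exampleDigraph4

theorem isAcyclicOn_pair_three (v : Fin 4) :
    IsAcyclicOn exampleDigraph4 {v, 3} := by
  apply isAcyclicOn_pair <;> unfold exampleDigraph4 <;> decide +revert

theorem isAcyclicOn_zero_one : IsAcyclicOn exampleDigraph4 {0, 1} := by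
  apply isAcyclicOn_pair <;> unfold exampleDigraph4 <;> decide

theorem two_le_card_inter_of_isDirCycle {c : List (Fin 4)} (hc : IsDirCycle exampleDigraph4 c) :
    2 ≤ (c.toFinset ∩ {0, 1, 2}).card := by
  by_contra! hcard
  obtain ⟨v, hv⟩ := Finset.card_le_one_iff_subset_singleton.mp (Nat.le_of_lt_succ hcard)
  refine (isAcyclicOn_pair_three v).not_toFinset_subset hc fun w hw => ?_
  have hcover : ∀ u : Fin 4, u ∈ ({0, 1, 2} : Finset (Fin 4)) ∨ u = 3 := by decide
  rcases hcover w with hw' | rfl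
  · have hwv : w = v := Finset.mem_singleton.mp (hv (Finset.mem_inter.mpr ⟨hw, hw'⟩))
    simp [hwv]
  · simp

theorem exists_common_vertex_of_isDirCycle {c d : List (Fin 4)}
    (hc : IsDirCycle exampleDigraph4 c) (hd : IsDirCycle exampleDigraph4 d) :
    ∃ v ∈ c, v ∈ d := by
  have hcard : ({0, 1, 2} : Finset (Fin 4)).card <
      (c.toFinset ∩ {0, 1, 2}).card + (d.toFinset ∩ {0, 1, 2}).card :=
    Nat.lt_of_lt_of_le (by decide) (Nat.add_le_add (two_le_card_inter_of_isDirCycle hc)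
      (two_le_card_inter_of_isDirCycle hd))
  obtain ⟨v, hv⟩ := Finset.inter_nonempty_of_card_lt_card_add_card
    Finset.inter_subset_right Finset.inter_subset_right hcard
  simp only [Finset.mem_inter, List.mem_toFinset] at hv
  exact ⟨v, hv.1.1, hv.2.1⟩

theorem hasIndexCode_two : HasIndexCode exampleDigraph4 2 := by
  refine ⟨fun x => ![x 0 + x 3, x 0 + x 1 + x 2], isIndexCode_iff.mpr fun i x y hEnc hside => ?_⟩
  have h₀ : x 0 + x 3 = y 0 + y 3 := congrFun hEnc 0
  have h₁ : x 0 + x 1 + x 2 = y 0 + y 1 + y 2 := congrFun hEnc 1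
  match i, hside with
  | 0, hside =>
    have hx : x 3 = y 3 := by simpa [exampleDigraph4] using hside
    linear_combination h₀ - hx
  | 1, hside =>
    have ⟨hx₀, hx₂⟩ : x 0 = y 0 ∧ x 2 = y 2 := by simpa [exampleDigraph4] using hside
    linear_combination h₁ - hx₀ - hx₂
  | 2, hside =>
    have ⟨hx₀, hx₁⟩ : x 0 = y 0 ∧ x 1 = y 1 := by simpa [exampleDigraph4] using hside
    linear_combination h₁ - hx₀ - hx₁
  | 3, hside =>
    have ⟨hx₁, hx₂⟩ : x 1 = y 1 ∧ x 2 = y 2 := by simpa [exampleDigraph4] using hside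
    linear_combination h₀ - h₁ + hx₁ + hx₂

theorem minIndexCodeLength_eq_two : minIndexCodeLength exampleDigraph4 = 2 :=
  IsLeast.csInf_eq ⟨hasIndexCode_two, fun _ hℓ =>
    isAcyclicOn_zero_one.card_le_of_hasIndexCode hℓ⟩

end exampleDigraph4

/-- For the 4-client example, every family of pairwise vertex-disjoint directed cycles has
at most one element; hence the cycle bound `ℓ* ≤ n - α` only gives `ℓ* ≤ 3`, whereas in fact
`ℓ* = 2`. -/
theorem example4_cycle_bound_not_tight :
    (∀ (α : ℕ) (cyc : Fin α → List (Fin 4)),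
      (∀ a : Fin α, IsDirCycle exampleDigraph4 (cyc a)) →
      (∀ a b : Fin α, a ≠ b → ∀ v : Fin 4, v ∈ cyc a → v ∉ cyc b) →
      α ≤ 1) ∧
    minIndexCodeLength exampleDigraph4 ≤ 3 ∧
    minIndexCodeLength exampleDigraph4 = 2 := by
  refine ⟨fun α cyc hcyc hdisj => Fin.subsingleton_iff_le_one.mp ⟨fun a b => ?_⟩,
    exampleDigraph4.minIndexCodeLength_eq_two.trans_le (by decide),
    exampleDigraph4.minIndexCodeLength_eq_two⟩
  obtain ⟨v, hva, hvb⟩ := exampleDigraph4.exists_common_vertex_of_isDirCycle (hcyc a) (hcyc b)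
  by_contra hab
  exact hdisj a b hab v hva hvb
end
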